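/- The interaction preorder ⊑int on ordinary λ-terms is a consistent inequational λ-theory (a compatible preorder containing β-conversion, different from the total relation); moreover it is not semi-extensional (it does not contain η-reduction), hence not extensional. -/

import Mathlib

set_option autoImplicit false

/-! ### Players -/

inductive Player : Type
  | white
  | black
deriving DecidableEq

/-- The opposite player. -/
def Player.op : Player → Player
  | .white => .black
  | .black => .white

/-- `gamma p q` is `0` if the players agree (silent) and `1` otherwise (interaction). -/
def Player.gamma (p q : Player) : ℕ := if p = q then 0 else 1

/-! ### Ordinary λ-terms (de Bruijn representation) -/

inductive Lam : Type
  | var : ℕ → Lam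
  | lam : Lam → Lam
  | app : Lam → Lam → Lam
deriving DecidableEq

namespace Lam

/-- Shift the free de Bruijn indices ≥ `d` by one. -/
def liftAt : Lam → ℕ → Lam
  | .var n, d => .var (if n < d then n else n + 1)
  | .lam t, d => .lam (t.liftAt (d + 1))
  | .app t u, d => .app (t.liftAt d) (u.liftAt d)

/-- Capture-avoiding substitution of `u` for the de Bruijn index `x`. -/
def subst : Lam → ℕ → Lam → Lam
  | .var n, x, u => if n = x then u else if x < n then .var (n - 1) else .var n
  | .lam t, x, u => .lam (t.subst (x + 1) (u.liftAt 0))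
  | .app t s, x, u => .app (t.subst x u) (s.subst x u)

end Lam

/-- Root β-rule: `(λx.t) u ↦ t[x:=u]`. -/
inductive LBetaRoot : Lam → Lam → Prop
  | beta (t u : Lam) : LBetaRoot (.app (.lam t) u) (t.subst 0 u)

/-- Root η-rule: `λx. t x ↦ t` with `x ∉ FV(t)` (enforced by the lifting). -/
inductive LEtaRoot : Lam → Lam → Prop
  | eta (t : Lam) : LEtaRoot (.lam (.app (t.liftAt 0) (.var 0))) t

/-- Closure of a root relation under all contexts. -/
inductive LFull (R : Lam → Lam → Prop) : Lam → Lam → Prop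
  | root {t u : Lam} : R t u → LFull R t u
  | lam {t u : Lam} : LFull R t u → LFull R (.lam t) (.lam u)
  | appL {t t' : Lam} (u : Lam) : LFull R t t' → LFull R (.app t u) (.app t' u)
  | appR (t : Lam) {u u' : Lam} : LFull R u u' → LFull R (.app t u) (.app t u')

/-- Closure under applicative spine contexts `⟨·⟩ t1 … tk`. -/
inductive LSpine (R : Lam → Lam → Prop) : Lam → Lam → Prop
  | root {t u : Lam} : R t u → LSpine R t u
  | appL {t t' : Lam} (u : Lam) : LSpine R t t' → LSpine R (.app t u) (.app t' u)

/-- Closure under head contexts `λx1…xn.⟨·⟩ t1 … tk`. -/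
inductive LHead (R : Lam → Lam → Prop) : Lam → Lam → Prop
  | spine {t u : Lam} : LSpine R t u → LHead R t u
  | lam {t u : Lam} : LHead R t u → LHead R (.lam t) (.lam u)

/-- β-reduction. -/
def LBeta : Lam → Lam → Prop := LFull LBetaRoot
/-- η-reduction. -/
def LEta : Lam → Lam → Prop := LFull LEtaRoot
/-- Head reduction. -/
def LHStep : Lam → Lam → Prop := LHead LBetaRoot
/-- Multistep head reduction. -/
def LHSteps : Lam → Lam → Prop := Relation.ReflTransGen LHStep

/-- β-conversion (reflexive-symmetric-transitive closure of β-reduction). -/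
def LBetaConv : Lam → Lam → Prop :=
  Relation.ReflTransGen (fun a b => LBeta a b ∨ LBeta b a)
/-- η-conversion. -/
def LEtaConv : Lam → Lam → Prop :=
  Relation.ReflTransGen (fun a b => LEta a b ∨ LEta b a)

/-- Head normal forms: no head step out of `t`. -/
def Lam.LHNF (t : Lam) : Prop := ∀ u, ¬ LHStep t u

/-- Head convergence: `t ⇓h`. -/
def Lam.HConv (t : Lam) : Prop := ∃ h, LHSteps t h ∧ h.LHNF

/-- Ordinary contexts (one hole). -/
inductive LCtx : Type
  | hole : LCtx
  | lam : LCtx → LCtx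
  | appL : LCtx → Lam → LCtx
  | appR : Lam → LCtx → LCtx

/-- Plugging (allowing variable capture). -/
def LCtx.fill : LCtx → Lam → Lam
  | .hole, t => t
  | .lam C, t => .lam (C.fill t)
  | .appL C u, t => .app (C.fill t) u
  | .appR s C, t => .app s (C.fill t)

/-- Head contextual preorder on λ-terms. -/
def CtxLe (t u : Lam) : Prop := ∀ C : LCtx, (C.fill t).HConv → (C.fill u).HConv

/-! ### Checkers terms -/

inductive CTerm : Type
  | var : ℕ → CTerm
  | lam : Player → CTerm → CTerm
  | app : Player → CTerm → CTerm → CTerm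
deriving DecidableEq

namespace CTerm

/-- Shift the free de Bruijn indices ≥ `d` by one. -/
def liftAt : CTerm → ℕ → CTerm
  | .var n, d => .var (if n < d then n else n + 1)
  | .lam p t, d => .lam p (t.liftAt (d + 1))
  | .app p t u, d => .app p (t.liftAt d) (u.liftAt d)

/-- Capture-avoiding substitution of `u` for the de Bruijn index `x`. -/
def subst : CTerm → ℕ → CTerm → CTerm
  | .var n, x, u => if n = x then u else if x < n then .var (n - 1) else .var n
  | .lam p t, x, u => .lam p (t.subst (x + 1) (u.liftAt 0))
  | .app p t s, x, u => .app p (t.subst x u) (s.subst x u)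

/-- The underlying ordinary λ-term of a checkers term. -/
def untag : CTerm → Lam
  | .var n => .var n
  | .lam _ t => .lam t.untag
  | .app _ t u => .app t.untag u.untag

end CTerm

/-- Player lifting: tag every abstraction and application with player `p`. -/
def Lam.tag : Lam → Player → CTerm
  | .var n, _ => .var n
  | .lam t, p => .lam p (t.tag p)
  | .app t u, p => .app p (t.tag p) (u.tag p)

/-- Silent β root rule: the abstraction and the application carry the same player. -/
inductive SilentRoot : CTerm → CTerm → Prop
  | beta (p : Player) (t u : CTerm) : SilentRoot (.app p (.lam p t) u) (t.subst 0 u)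

/-- Interaction β root rule: the application carries the opposite player of the abstraction. -/
inductive InterRoot : CTerm → CTerm → Prop
  | beta (p : Player) (t u : CTerm) : InterRoot (.app p.op (.lam p t) u) (t.subst 0 u)

/-- Closure of a root relation under all checkers contexts. -/
inductive CFull (R : CTerm → CTerm → Prop) : CTerm → CTerm → Prop
  | root {t u : CTerm} : R t u → CFull R t u
  | lam (p : Player) {t u : CTerm} : CFull R t u → CFull R (.lam p t) (.lam p u)
  | appL (p : Player) {t t' : CTerm} (u : CTerm) : CFull R t t' → CFull R (.app p t u) (.app p t' u)
  | appR (p : Player) (t : CTerm) {u u' : CTerm} : CFull R u u' → CFull R (.app p t u) (.app p t u')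

/-- Closure under applicative spine contexts `⟨·⟩ @_{q1} t1 … @_{qk} tk`. -/
inductive CSpine (R : CTerm → CTerm → Prop) : CTerm → CTerm → Prop
  | root {t u : CTerm} : R t u → CSpine R t u
  | appL (p : Player) {t t' : CTerm} (u : CTerm) : CSpine R t t' → CSpine R (.app p t u) (.app p t' u)

/-- Closure under checkers head contexts `λ_{p1}x1…λ_{pn}xn.⟨·⟩ @_{q1} t1 … @_{qk} tk`. -/
inductive CHead (R : CTerm → CTerm → Prop) : CTerm → CTerm → Prop
  | spine {t u : CTerm} : CSpine R t u → CHead R t u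
  | lam (p : Player) {t u : CTerm} : CHead R t u → CHead R (.lam p t) (.lam p u)

/-- Silent β-reduction `→τ`. -/
def StepTau : CTerm → CTerm → Prop := CFull SilentRoot
/-- Interaction β-reduction `→⊛`. -/
def StepInt : CTerm → CTerm → Prop := CFull InterRoot
/-- Checkers β-reduction `→βch`. -/
def StepBch (t u : CTerm) : Prop := StepTau t u ∨ StepInt t u

/-- Silent head reduction `→hτ`. -/
def HStepTau : CTerm → CTerm → Prop := CHead SilentRoot
/-- Interaction head reduction `→h⊛`. -/
def HStepInt : CTerm → CTerm → Prop := CHead InterRoot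
/-- Checkers head reduction `→hch`. -/
def HStepCh (t u : CTerm) : Prop := HStepTau t u ∨ HStepInt t u

/-- Checkers head normal form. -/
def CTerm.HNF (t : CTerm) : Prop := ∀ u, ¬ HStepCh t u

/-- `BigStep t k` means `t ⇓^k`: the (deterministic) checkers head evaluation of `t`
terminates and performs exactly `k` interaction steps. -/
inductive BigStep : CTerm → ℕ → Prop
  | nf {t : CTerm} : t.HNF → BigStep t 0
  | silent {t u : CTerm} {k : ℕ} : HStepTau t u → BigStep u k → BigStep t k
  | inter {t u : CTerm} {k : ℕ} : HStepInt t u → BigStep u k → BigStep t (k + 1)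

/-- `HRed t n i u`: a checkers head reduction sequence from `t` to `u` of length `n`
containing exactly `i` interaction steps. -/
inductive HRed : CTerm → ℕ → ℕ → CTerm → Prop
  | refl (t : CTerm) : HRed t 0 0 t
  | silent {t u s : CTerm} {n i : ℕ} : HStepTau t u → HRed u n i s → HRed t (n + 1) i s
  | inter {t u s : CTerm} {n i : ℕ} : HStepInt t u → HRed u n i s → HRed t (n + 1) (i + 1) s

/-- Checkers contexts (one hole). -/
inductive CCtx : Type
  | hole : CCtx
  | lam : Player → CCtx → CCtx
  | appL : Player → CCtx → CTerm → CCtx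
  | appR : Player → CTerm → CCtx → CCtx

/-- Plugging (allowing variable capture). -/
def CCtx.fill : CCtx → CTerm → CTerm
  | .hole, t => t
  | .lam p C, t => .lam p (C.fill t)
  | .appL p C u, t => .app p (C.fill t) u
  | .appR p s C, t => .app p s (C.fill t)

/-- Player lifting of ordinary contexts. -/
def LCtx.tag : LCtx → Player → CCtx
  | .hole, _ => .hole
  | .lam C, p => .lam p (C.tag p)
  | .appL C u, p => .appL p (C.tag p) (u.tag p)
  | .appR s C, p => .appR p (s.tag p) (C.tag p)

/-- Checkers interaction preorder `≼ctx⊛` on checkers terms. -/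
def IntCtxLe (t u : CTerm) : Prop :=
  ∀ (C : CCtx) (k : ℕ), BigStep (C.fill t) k → BigStep (C.fill u) k

/-- Checkers interaction improvement `≼imp⊛` on checkers terms. -/
def ImpCtxLe (t u : CTerm) : Prop :=
  ∀ (C : CCtx) (k : ℕ), BigStep (C.fill t) k → ∃ k', k' ≤ k ∧ BigStep (C.fill u) k'

/-- Interaction preorder `⊑int` on ordinary λ-terms, via black lifting. -/
def IntLe (t u : Lam) : Prop := IntCtxLe (t.tag .black) (u.tag .black)

/-- Interaction improvement `⊑int·imp` on ordinary λ-terms, via black lifting. -/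
def ImpLe (t u : Lam) : Prop := ImpCtxLe (t.tag .black) (u.tag .black)

/-- Interaction equivalence `≡int`. -/
def IntEq (t u : Lam) : Prop := IntLe t u ∧ IntLe u t

/-- Silent conversion `=τ`: reflexive-symmetric-transitive closure of `→τ`. -/
def SilentConv : CTerm → CTerm → Prop :=
  Relation.ReflTransGen (fun a b => StepTau a b ∨ StepTau b a)


namespace CTerm

theorem liftAt_liftAt (t : CTerm) : ∀ i j, i ≤ j →
    (t.liftAt i).liftAt (j + 1) = (t.liftAt j).liftAt i := by
  induction t with
  | var n => intro i j h; simp only [liftAt]; grind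
  | lam p t ih => intro i j h; simp only [liftAt]; rw [ih (i+1) (j+1) (by omega)]
  | app p t u ih1 ih2 => intro i j h; simp only [liftAt]; rw [ih1 i j h, ih2 i j h]

theorem liftAt_subst_le (t : CTerm) : ∀ x d u, x ≤ d →
    (t.subst x u).liftAt d = (t.liftAt (d + 1)).subst x (u.liftAt d) := by
  induction t with
  | var n => intro x d u h; simp only [liftAt, subst]; grind [liftAt]
  | lam p t ih =>
    intro x d u h; simp only [liftAt, subst]
    rw [ih (x+1) (d+1) _ (by omega), liftAt_liftAt u 0 d (by omega)]
  | app p t u ih1 ih2 => intro x d s h; simp only [liftAt, subst]; rw [ih1 _ _ _ h, ih2 _ _ _ h]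

theorem liftAt_subst_ge (t : CTerm) : ∀ x d u, d ≤ x →
    (t.subst x u).liftAt d = (t.liftAt d).subst (x + 1) (u.liftAt d) := by
  induction t with
  | var n => intro x d u h; simp only [liftAt, subst]; grind [liftAt]
  | lam p t ih =>
    intro x d u h; simp only [liftAt, subst]
    rw [ih (x+1) (d+1) _ (by omega), liftAt_liftAt u 0 d (by omega)]
  | app p t u ih1 ih2 => intro x d s h; simp only [liftAt, subst]; rw [ih1 _ _ _ h, ih2 _ _ _ h]

theorem subst_liftAt (t : CTerm) : ∀ x u, (t.liftAt x).subst x u = t := by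
  induction t with
  | var n => intro x u; simp only [liftAt, subst]; grind
  | lam p t ih => intro x u; simp only [liftAt, subst, ih]
  | app p t u ih1 ih2 => intro x s; simp only [liftAt, subst, ih1, ih2]

theorem subst_subst (t : CTerm) : ∀ x y u s, x ≤ y →
    (t.subst x u).subst y s = (t.subst (y + 1) (s.liftAt x)).subst x (u.subst y s) := by
  induction t with
  | var n =>
    intro x y u s h
    rcases lt_trichotomy n x with h1 | h1 | h1
    · simp only [subst]; grind [subst]
    · simp only [subst]; grind [subst]
    · by_cases h2 : n = y + 1
      · subst h2
        have : ¬ (y + 1 = x) := by omega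
        simp [subst, subst_liftAt, this, h1]
      · simp only [subst]; grind [subst]
  | lam p t ih =>
    intro x y u s h; simp only [subst]
    rw [ih (x+1) (y+1) _ _ (by omega), liftAt_liftAt s 0 x (by omega),
      liftAt_subst_ge u y 0 s (by omega)]
  | app p t u ih1 ih2 => intro x y v s h; simp only [subst]; rw [ih1 _ _ _ _ h, ih2 _ _ _ _ h]

end CTerm

open CTerm Relation

inductive Sp : ℕ → CTerm → CTerm → Prop
  | beta (p q : Player) (t u : CTerm) :
      Sp (Player.gamma p q) (.app p (.lam q t) u) (t.subst 0 u)
  | appL {i : ℕ} (p : Player) {t t' : CTerm} (u : CTerm) :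
      Sp i t t' → Sp i (.app p t u) (.app p t' u)

inductive Hd : ℕ → CTerm → CTerm → Prop
  | spine {i : ℕ} {t u : CTerm} : Sp i t u → Hd i t u
  | lam {i : ℕ} (p : Player) {t u : CTerm} : Hd i t u → Hd i (.lam p t) (.lam p u)

theorem sp_zero_iff {t u : CTerm} : CSpine SilentRoot t u ↔ Sp 0 t u := by
  constructor
  · intro h
    induction h with
    | root h => cases h with
      | beta p t u => simpa [Player.gamma] using Sp.beta p p t u
    | appL p u _ ih => exact .appL p u ih
  · intro h
    generalize hi : 0 = i at h
    induction h with
    | beta p q t u =>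
      have : p = q := by by_contra hne; simp [Player.gamma, hne] at hi
      subst this; exact .root (.beta p t u)
    | appL p u _ ih => exact .appL p u (ih hi)

theorem sp_one_iff {t u : CTerm} : CSpine InterRoot t u ↔ Sp 1 t u := by
  constructor
  · intro h
    induction h with
    | root h => cases h with
      | beta p t u =>
        have := Sp.beta p.op p t u
        cases p <;> simpa [Player.gamma, Player.op] using this
    | appL p u _ ih => exact .appL p u ih
  · intro h
    generalize hi : 1 = i at h
    induction h with
    | beta p q t u =>
      have : p = q.op := by cases p <;> cases q <;> simp [Player.gamma, Player.op] at *
      subst this; exact .root (.beta q t u)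
    | appL p u _ ih => exact .appL p u (ih hi)

theorem hd_of {R : CTerm → CTerm → Prop} {i : ℕ} (hR : ∀ {t u}, CSpine R t u ↔ Sp i t u)
    {t u : CTerm} : CHead R t u ↔ Hd i t u := by
  constructor
  · intro h
    induction h with
    | spine h => exact .spine (hR.1 h)
    | lam p _ ih => exact .lam p ih
  · intro h
    induction h with
    | spine h => exact .spine (hR.2 h)
    | lam p _ ih => exact .lam p ih

theorem tau_iff {t u : CTerm} : HStepTau t u ↔ Hd 0 t u := hd_of sp_zero_iff
theorem int_iff {t u : CTerm} : HStepInt t u ↔ Hd 1 t u := hd_of sp_one_iff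

theorem sp_le {i : ℕ} {t u : CTerm} (h : Sp i t u) : i = 0 ∨ i = 1 := by
  induction h with
  | beta p q t u => by_cases h : p = q <;> simp [Player.gamma, h]
  | appL _ _ _ ih => exact ih

theorem hd_le {i : ℕ} {t u : CTerm} (h : Hd i t u) : i = 0 ∨ i = 1 := by
  induction h with
  | spine h => exact sp_le h
  | lam _ _ ih => exact ih

theorem hnf_iff {t : CTerm} : t.HNF ↔ ∀ i u, ¬ Hd i t u := by
  constructor
  · intro h i u hd
    rcases hd_le hd with rfl | rfl
    · exact h u (.inl (tau_iff.2 hd))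
    · exact h u (.inr (int_iff.2 hd))
  · rintro h u (hd | hd)
    · exact h _ u (tau_iff.1 hd)
    · exact h _ u (int_iff.1 hd)

theorem sp_det {i j : ℕ} {t u v : CTerm} (h : Sp i t u) (h' : Sp j t v) : i = j ∧ u = v := by
  induction h generalizing v with
  | beta p q t u =>
    cases h' with
    | beta => exact ⟨rfl, rfl⟩
    | appL _ _ h => cases h
  | appL p u h ih =>
    cases h' with
    | beta => cases h
    | appL _ _ h2 =>
      obtain ⟨rfl, rfl⟩ := ih h2
      exact ⟨rfl, rfl⟩

theorem rtg_map {R Q : CTerm → CTerm → Prop} (f : CTerm → CTerm)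
    (hf : ∀ a b, R a b → Q (f a) (f b)) {t u : CTerm} (h : ReflTransGen R t u) :
    ReflTransGen Q (f t) (f u) := by
  induction h with
  | refl => exact .refl
  | tail _ h ih => exact ih.tail (hf _ _ h)

theorem sp_lam_not {i : ℕ} {p : Player} {a u : CTerm} : ¬ Sp i (.lam p a) u := by
  intro h; cases h

def Red : CTerm → CTerm → Prop := ReflTransGen (Sp 0)
def HRd : CTerm → CTerm → Prop := ReflTransGen (Hd 0)

theorem sp_lift {i : ℕ} {t u : CTerm} (h : Sp i t u) (d : ℕ) :
    Sp i (t.liftAt d) (u.liftAt d) := by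
  induction h with
  | beta p q t u =>
    rw [liftAt_subst_le _ _ _ _ (Nat.zero_le d)]
    exact .beta p q _ _
  | appL p u _ ih => exact .appL p _ ih

theorem sp_subst {i : ℕ} {t u : CTerm} (h : Sp i t u) (x : ℕ) (s : CTerm) :
    Sp i (t.subst x s) (u.subst x s) := by
  induction h with
  | beta p q t u =>
    rw [subst_subst _ _ _ _ _ (Nat.zero_le x)]
    exact .beta p q _ _
  | appL p u _ ih => exact .appL p _ ih

theorem red_lift {t u : CTerm} (h : Red t u) (d : ℕ) : Red (t.liftAt d) (u.liftAt d) :=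
  rtg_map (fun t : CTerm => t.liftAt d) (fun _ _ h => sp_lift h d) h

theorem red_subst {t u : CTerm} (h : Red t u) (x : ℕ) (s : CTerm) :
    Red (t.subst x s) (u.subst x s) :=
  rtg_map (fun t : CTerm => t.subst x s) (fun _ _ h => sp_subst h x s) h

theorem red_appL {t u : CTerm} (h : Red t u) (p : Player) (s : CTerm) :
    Red (.app p t s) (.app p u s) :=
  rtg_map (fun t : CTerm => CTerm.app p t s) (fun _ _ h => .appL p s h) h

theorem hrd_lam {t u : CTerm} (h : HRd t u) (p : Player) : HRd (.lam p t) (.lam p u) :=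
  rtg_map (fun t : CTerm => CTerm.lam p t) (fun _ _ h => .lam p h) h

theorem red_hrd {t u : CTerm} (h : Red t u) : HRd t u :=
  rtg_map (fun t => t) (fun _ _ h => Hd.spine h) h

inductive Std : CTerm → CTerm → Prop
  | var {t : CTerm} {n : ℕ} : Red t (.var n) → Std t (.var n)
  | lam {t a a' : CTerm} {p : Player} : Red t (.lam p a) → Std a a' → Std t (.lam p a')
  | app {t a b a' b' : CTerm} {p : Player} : Red t (.app p a b) → Std a a' → Std b b' →
      Std t (.app p a' b')

theorem Std.refl (t : CTerm) : Std t t := by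
  induction t with
  | var n => exact .var .refl
  | lam p t ih => exact .lam .refl ih
  | app p t u h1 h2 => exact .app .refl h1 h2

theorem Std.exp {t t' u : CTerm} (h : Red t t') (hs : Std t' u) : Std t u := by
  cases hs with
  | var h' => exact .var (h.trans h')
  | lam h' h1 => exact .lam (h.trans h') h1
  | app h' h1 h2 => exact .app (h.trans h') h1 h2

theorem Std.lift {t u : CTerm} (h : Std t u) (d : ℕ) : Std (t.liftAt d) (u.liftAt d) := by
  induction h generalizing d with
  | var h => exact .var (red_lift h d)
  | lam h _ ih => exact .lam (red_lift h d) (ih _)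
  | app h _ _ ih1 ih2 => exact .app (red_lift h d) (ih1 _) (ih2 _)

theorem Std.subst {t u : CTerm} (h : Std t u) (x : ℕ) {s s' : CTerm} (hs : Std s s') :
    Std (t.subst x s) (u.subst x s') := by
  induction h generalizing x s s' with
  | @var t n h =>
    refine .exp (red_subst h x s) ?_
    simp only [CTerm.subst]
    split_ifs
    · exact hs
    · exact .refl _
    · exact .refl _
  | lam h _ ih => exact .lam (red_subst h x s) (ih _ (hs.lift 0))
  | app h _ _ ih1 ih2 => exact .app (red_subst h x s) (ih1 _ hs) (ih2 _ hs)

theorem std_of_tau {t u : CTerm} (h : StepTau t u) : Std t u := by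
  unfold StepTau at h
  induction h with
  | root h => cases h with
    | beta p t u => exact .exp (.single (sp_zero_iff.1 (.root (.beta p t u)))) (.refl _)
  | lam p _ ih => exact .lam .refl ih
  | appL p u _ ih => exact .app .refl ih (.refl _)
  | appR p t _ ih => exact .app .refl (.refl _) ih


theorem red_cases {t s t' : CTerm} {i : ℕ} (h : Red t s) (hs : Sp i t t') :
    t = s ∨ (i = 0 ∧ Red t' s) := by
  rcases ReflTransGen.cases_head h with h | ⟨c, hc, hr⟩
  · exact .inl h
  · obtain ⟨rfl, rfl⟩ := sp_det hs hc
    exact .inr ⟨rfl, hr⟩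

theorem std_lam_inv {p : Player} {a u : CTerm} (h : Std (.lam p a) u) :
    ∃ a', u = .lam p a' ∧ Std a a' := by
  have key : ∀ s, Red (.lam p a) s → s = .lam p a := by
    intro s hs
    rcases ReflTransGen.cases_head hs with h | ⟨c, hc, _⟩
    · exact h.symm
    · exact (sp_lam_not hc).elim
  cases h with
  | var h => cases key _ h
  | lam h h1 => cases key _ h; exact ⟨_, rfl, h1⟩
  | app h => cases key _ h

theorem std_sp_cases {t u t' : CTerm} {i : ℕ} (h : Std t u) (hs : Sp i t t') :
    (i = 0 ∧ Std t' u) ∨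
    ∃ p a b a' b', t = .app p a b ∧ u = .app p a' b' ∧ Std a a' ∧ Std b b' := by
  cases h with
  | var h =>
    rcases red_cases h hs with rfl | ⟨rfl, h⟩
    · cases hs
    · exact .inl ⟨rfl, .var h⟩
  | lam h h1 =>
    rcases red_cases h hs with rfl | ⟨rfl, h⟩
    · cases hs
    · exact .inl ⟨rfl, .lam h h1⟩
  | app h h1 h2 =>
    rcases red_cases h hs with rfl | ⟨rfl, h⟩
    · exact .inr ⟨_, _, _, _, _, rfl, rfl, h1, h2⟩
    · exact .inl ⟨rfl, .app h h1 h2⟩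

theorem fwd_sp {t u t' : CTerm} {i : ℕ} (h : Std t u) (hs : Sp i t t') :
    (i = 0 ∧ Std t' u) ∨ ∃ u', Sp i u u' ∧ Std t' u' := by
  induction hs generalizing u with
  | beta p q a b =>
    rcases std_sp_cases h (.beta p q a b) with h | ⟨_, _, _, a', b', e, rfl, h1, h2⟩
    · exact .inl h
    · cases e
      obtain ⟨c, rfl, hc⟩ := std_lam_inv h1
      exact .inr ⟨_, .beta _ _ _ _, hc.subst 0 h2⟩
  | appL p s hs ih =>
    rcases std_sp_cases h (.appL p s hs) with h | ⟨_, _, _, a', b', e, rfl, h1, h2⟩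
    · exact .inl h
    · cases e
      rcases ih h1 with ⟨rfl, h3⟩ | ⟨u', h3, h4⟩
      · exact .inl ⟨rfl, .app .refl h3 h2⟩
      · exact .inr ⟨_, .appL _ _ h3, .app .refl h4 h2⟩

theorem fwd_hd {t u t' : CTerm} {i : ℕ} (h : Std t u) (hs : Hd i t t') :
    (i = 0 ∧ Std t' u) ∨ ∃ u', Hd i u u' ∧ Std t' u' := by
  induction hs generalizing u with
  | spine hs =>
    rcases fwd_sp h hs with h | ⟨u', h1, h2⟩
    · exact .inl h
    · exact .inr ⟨u', .spine h1, h2⟩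
  | lam p hs ih =>
    obtain ⟨c, rfl, hc⟩ := std_lam_inv h
    rcases ih hc with ⟨rfl, h3⟩ | ⟨u', h3, h4⟩
    · exact .inl ⟨rfl, .lam .refl h3⟩
    · exact .inr ⟨_, .lam _ h3, .lam .refl h4⟩


theorem bwd_sp {t u u' : CTerm} {i : ℕ} (h : Std t u) (hs : Sp i u u') :
    ∃ t1 t', Red t t1 ∧ Sp i t1 t' ∧ Std t' u' := by
  induction hs generalizing t with
  | beta p q a b =>
    cases h with
    | app h h1 h2 =>
      cases h1 with
      | lam h3 h4 =>
        exact ⟨_, _, h.trans (red_appL h3 _ _), .beta _ _ _ _, h4.subst 0 h2⟩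
  | appL p s hs ih =>
    cases h with
    | app h h1 h2 =>
      obtain ⟨t1, t', h3, h4, h5⟩ := ih h1
      exact ⟨_, _, h.trans (red_appL h3 _ _), .appL _ _ h4, .app .refl h5 h2⟩

theorem bwd_hd {t u u' : CTerm} {i : ℕ} (h : Std t u) (hs : Hd i u u') :
    ∃ t1 t', HRd t t1 ∧ Hd i t1 t' ∧ Std t' u' := by
  induction hs generalizing t with
  | spine hs =>
    obtain ⟨t1, t', h1, h2, h3⟩ := bwd_sp h hs
    exact ⟨t1, t', red_hrd h1, .spine h2, h3⟩
  | lam p hs ih =>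
    cases h with
    | lam h h1 =>
      obtain ⟨t1, t', h3, h4, h5⟩ := ih h1
      exact ⟨_, _, (red_hrd h).trans (hrd_lam h3 _), .lam _ h4, .lam .refl h5⟩

theorem bwd_sp_nf {t u : CTerm} (h : Std t u) (hn : ∀ i v, ¬ Sp i u v) :
    ∃ t1, Red t t1 ∧ (∀ i v, ¬ Sp i t1 v) ∧
      ((∃ p a, t1 = .lam p a) → ∃ p a, u = .lam p a) := by
  induction h with
  | var h => exact ⟨_, h, fun i v h => (by cases h), fun ⟨p, a, e⟩ => (by cases e)⟩
  | lam h _ _ => exact ⟨_, h, fun i v h => (by cases h), fun _ => ⟨_, _, rfl⟩⟩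
  | app h h1 h2 ih _ =>
    obtain ⟨t1, h3, h4, h5⟩ := ih (fun i v h => hn _ _ (.appL _ _ h))
    refine ⟨_, h.trans (red_appL h3 _ _), ?_, fun ⟨p, a, e⟩ => (by cases e)⟩
    intro i v hv
    cases hv with
    | beta =>
      obtain ⟨p, a, rfl⟩ := h5 ⟨_, _, rfl⟩
      exact hn _ _ (.beta _ _ _ _)
    | appL _ _ h => exact h4 _ _ h

theorem bwd_hd_nf {t u : CTerm} (h : Std t u) (hn : ∀ i v, ¬ Hd i u v) :
    ∃ t1, HRd t t1 ∧ (∀ i v, ¬ Hd i t1 v) := by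
  induction h with
  | var h =>
    refine ⟨_, red_hrd h, fun i v h => ?_⟩
    cases h with
    | spine h => cases h
  | lam h _ ih =>
    obtain ⟨t1, h1, h2⟩ := ih (fun i v h => hn _ _ (.lam _ h))
    refine ⟨_, (red_hrd h).trans (hrd_lam h1 _), fun i v h => ?_⟩
    cases h with
    | spine h => cases h
    | lam _ h => exact h2 _ _ h
  | app h h1 h2 =>
    obtain ⟨t1, h3, h4, h5⟩ := bwd_sp_nf (.app h h1 h2) (fun i v h => hn _ _ (.spine h))
    refine ⟨_, red_hrd h3, fun i v h => ?_⟩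
    cases h with
    | spine h => exact h4 _ _ h
    | lam _ h =>
      obtain ⟨p, a, e⟩ := h5 ⟨_, _, rfl⟩
      cases e

theorem bs_exp {t t1 : CTerm} {k : ℕ} (h : HRd t t1) (hb : BigStep t1 k) : BigStep t k := by
  induction h using ReflTransGen.head_induction_on with
  | refl => exact hb
  | head h _ ih => exact .silent (tau_iff.2 h) ih

theorem bs_bwd {t u : CTerm} {k : ℕ} (hb : BigStep u k) (h : Std t u) : BigStep t k := by
  induction hb generalizing t with
  | nf hn =>
    obtain ⟨t1, h1, h2⟩ := bwd_hd_nf h (hnf_iff.1 hn)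
    exact bs_exp h1 (.nf (hnf_iff.2 h2))
  | silent hs _ ih =>
    obtain ⟨t1, t', h1, h2, h3⟩ := bwd_hd h (tau_iff.1 hs)
    exact bs_exp h1 (.silent (tau_iff.2 h2) (ih h3))
  | inter hs _ ih =>
    obtain ⟨t1, t', h1, h2, h3⟩ := bwd_hd h (int_iff.1 hs)
    exact bs_exp h1 (.inter (int_iff.2 h2) (ih h3))

theorem bs_fwd {t u : CTerm} {k : ℕ} (hb : BigStep t k) (h : Std t u) : BigStep u k := by
  induction hb generalizing u with
  | nf hn =>
    refine .nf (hnf_iff.2 fun i v hv => ?_)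
    obtain ⟨t1, t', h1, h2, h3⟩ := bwd_hd h hv
    rcases ReflTransGen.cases_head h1 with rfl | ⟨c, hc, _⟩
    · exact hnf_iff.1 hn _ _ h2
    · exact hnf_iff.1 hn _ _ hc
  | silent hs _ ih =>
    rcases fwd_hd h (tau_iff.1 hs) with ⟨_, h1⟩ | ⟨u', h1, h2⟩
    · exact ih h1
    · exact .silent (tau_iff.2 h1) (ih h2)
  | inter hs _ ih =>
    rcases fwd_hd h (int_iff.1 hs) with ⟨h0, _⟩ | ⟨u', h1, h2⟩
    · cases h0
    · exact .inter (int_iff.2 h1) (ih h2)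

theorem fill_tau (C : CCtx) {t u : CTerm} (h : StepTau t u) : StepTau (C.fill t) (C.fill u) := by
  induction C with
  | hole => exact h
  | lam p C ih => exact .lam p ih
  | appL p C s ih => exact .appL p s ih
  | appR p s C ih => exact .appR p s ih

theorem tag_lift (t : Lam) (p : Player) : ∀ d, (t.liftAt d).tag p = (t.tag p).liftAt d := by
  induction t with
  | var n => intro d; rfl
  | lam t ih => intro d; simp only [Lam.liftAt, Lam.tag, CTerm.liftAt, ih]
  | app t u h1 h2 => intro d; simp only [Lam.liftAt, Lam.tag, CTerm.liftAt, h1, h2]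

theorem tag_subst (t : Lam) (p : Player) :
    ∀ x u, (t.subst x u).tag p = (t.tag p).subst x (u.tag p) := by
  induction t with
  | var n => intro x u; simp only [Lam.subst, Lam.tag, CTerm.subst]; split_ifs <;> rfl
  | lam t ih => intro x u; simp only [Lam.subst, Lam.tag, CTerm.subst, ih, tag_lift]
  | app t u h1 h2 => intro x s; simp only [Lam.subst, Lam.tag, CTerm.subst, h1, h2]

theorem tag_beta {t u : Lam} (h : LBeta t u) (p : Player) : StepTau (t.tag p) (u.tag p) := by
  unfold LBeta at h
  induction h with
  | root h => cases h with
    | beta t u => rw [tag_subst]; exact .root (.beta p _ _)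
  | lam _ ih => exact .lam p ih
  | appL u _ ih => exact .appL p _ ih
  | appR t _ ih => exact .appR p _ ih

theorem intLe_conv {t u : Lam} (h : LBetaConv t u) : IntLe t u := by
  unfold LBetaConv at h
  induction h with
  | refl => exact fun C k h => h
  | tail _ h ih =>
    intro C k hb
    have hb := ih C k hb
    rcases h with h | h
    · exact bs_fwd hb (std_of_tau (fill_tau C (tag_beta h _)))
    · exact bs_bwd hb (std_of_tau (fill_tau C (tag_beta h _)))

def CCtx.comp : CCtx → CCtx → CCtx
  | .hole, D => D
  | .lam p C, D => .lam p (C.comp D)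
  | .appL p C u, D => .appL p (C.comp D) u
  | .appR p s C, D => .appR p s (C.comp D)

theorem CCtx.comp_fill (C D : CCtx) (t : CTerm) : (C.comp D).fill t = C.fill (D.fill t) := by
  induction C with
  | hole => rfl
  | lam p C ih => simp only [CCtx.comp, CCtx.fill, ih]
  | appL p C u ih => simp only [CCtx.comp, CCtx.fill, ih]
  | appR p s C ih => simp only [CCtx.comp, CCtx.fill, ih]

theorem tag_fill (C : LCtx) (t : Lam) (p : Player) :
    (C.fill t).tag p = (C.tag p).fill (t.tag p) := by
  induction C with
  | hole => rfl
  | lam C ih => simp only [LCtx.fill, LCtx.tag, Lam.tag, CCtx.fill, ih]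
  | appL C u ih => simp only [LCtx.fill, LCtx.tag, Lam.tag, CCtx.fill, ih]
  | appR s C ih => simp only [LCtx.fill, LCtx.tag, Lam.tag, CCtx.fill, ih]

theorem var_app_hnf (p : Player) (m : ℕ) (s : CTerm) : (CTerm.app p (.var m) s).HNF := by
  refine hnf_iff.2 fun i v h => ?_
  cases h with
  | spine h => cases h with
    | appL _ _ h => cases h

theorem not_eta : ¬ IntLe (.lam (.app (.var 1) (.var 0))) (.var 0) := by
  intro h
  have h1 := h (.appL .white .hole (.var 0)) 1
    (.inter (int_iff.2 (.spine (.beta .white .black _ _))) (.nf (var_app_hnf _ _ _)))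
  have hn := var_app_hnf .white 0 (.var 0)
  simp only [CCtx.fill, Lam.tag] at h1
  cases h1 with
  | silent hs _ => exact hn _ (.inl hs)
  | inter hs _ => exact hn _ (.inr hs)

theorem eta_ex : LEta (.lam (.app (.var 1) (.var 0))) (.var 0) := .root (.eta (.var 0))

/-- The interaction preorder `⊑int` is a consistent inequational λ-theory:
a compatible preorder containing β-conversion and different from the total relation;
moreover it is not semi-extensional (it does not contain η-reduction), hence
not extensional (it does not contain η-conversion). -/
theorem intLe_consistent_inequational_theory :
    (∀ t, IntLe t t) ∧
    (∀ t u s, IntLe t u → IntLe u s → IntLe t s) ∧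
    (∀ t u, IntLe t u → ∀ C : LCtx, IntLe (C.fill t) (C.fill u)) ∧
    (∀ t u, LBetaConv t u → IntLe t u) ∧
    (∃ t u, ¬ IntLe t u) ∧
    (∃ t u, LEta t u ∧ ¬ IntLe t u) ∧
    (∃ t u, LEtaConv t u ∧ ¬ IntLe t u) := by
  refine ⟨fun t C k h => h, fun t u s h1 h2 C k h => h2 C k (h1 C k h), ?_,
    fun t u h => intLe_conv h, ⟨_, _, not_eta⟩, ⟨_, _, eta_ex, not_eta⟩,
    ⟨_, _, .single (.inl eta_ex), not_eta⟩⟩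
  intro t u h C D k hb
  rw [tag_fill, ← CCtx.comp_fill] at hb ⊢
  exact h _ k hb
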